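/- Let n ≥ 1 and let a > 0 be real. Let Φ : ℂⁿ → ℂ be holomorphic on an open set containing the tube T = {z ∈ ℂⁿ : −a ≤ Im z_k ≤ a for all k}; assume that for every w ∈ [−a, a]ⁿ the function v ↦ Φ(v + iw) is Lebesgue integrable on ℝⁿ, and that Φ(z) → 0 as ‖Re z‖ → ∞ uniformly for z ∈ T. Define p(x) = (2π)^{−n} ∫_{ℝⁿ} e^{−i⟨x,v⟩} Φ(v) dv, write 𝐚 = (a,…,a) ∈ ℝⁿ, and set M = (1/(2(2π)^{n})) ∫_{ℝⁿ} |Φ(v + i𝐚) + Φ(v − i𝐚)| dv. Then for every x ∈ ℝⁿ, |p(x)| ≤ M / cosh⟨x,𝐚⟩. -/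

import Mathlib

open MeasureTheory Complex

lemma shift_one_dim (g : ℂ → ℂ) (b c : ℝ)
    (hd : DifferentiableOn ℂ g {z | z.im ∈ Set.uIcc b c})
    (hb : Integrable (fun s : ℝ => g (s + b * I)))
    (hc : Integrable (fun s : ℝ => g (s + c * I)))
    (hdec : ∀ ε > (0 : ℝ), ∃ R : ℝ, ∀ z : ℂ, z.im ∈ Set.uIcc b c → R ≤ |z.re| → ‖g z‖ < ε) :
    ∫ s : ℝ, g (s + b * I) = ∫ s : ℝ, g (s + c * I) := by
  have h1 := intervalIntegral_tendsto_integral hb (Filter.tendsto_neg_atTop_atBot) Filter.tendsto_id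
  have h2 := intervalIntegral_tendsto_integral hc (Filter.tendsto_neg_atTop_atBot) Filter.tendsto_id
  have h3 := h1.sub h2
  have h4 : Filter.Tendsto (fun r : ℝ => (∫ s in (-r)..(id r), g (s + b * I)) -
      ∫ s in (-r)..(id r), g (s + c * I)) Filter.atTop (nhds 0) := by
    rw [Metric.tendsto_atTop]
    intro ε hε
    set L := |c - b| with hL
    have hL0 : 0 ≤ L := abs_nonneg _
    obtain ⟨R, hR⟩ := hdec (ε / (2 * (L + 1))) (by positivity)
    refine ⟨max R 0, fun r hr => ?_⟩
    have hrR : R ≤ r := le_trans (le_max_left _ _) hr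
    have hr0 : 0 ≤ r := le_trans (le_max_right _ _) hr
    have key := Complex.integral_boundary_rect_eq_zero_of_differentiableOn g
      (⟨-r, b⟩ : ℂ) (⟨r, c⟩ : ℂ) (hd.mono (by
        intro z hz
        exact hz.2))
    simp only at key
    have bd : ∀ q : ℝ, |q| = r → ‖∫ y in b..c, g ((q : ℂ) + y * I)‖ ≤ ε / (2 * (L + 1)) * L := by
      intro q hq
      refine intervalIntegral.norm_integral_le_of_norm_le_const (fun y hy => (hR _ ?_ ?_).le)
      · simpa using Set.uIoc_subset_uIcc hy
      · simpa [hq] using hrR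
    have e1 := bd r (abs_of_nonneg hr0)
    have e2 := bd (-r) (by rw [abs_neg, abs_of_nonneg hr0])
    have : (∫ s in (-r)..(id r), g (s + b * I)) - ∫ s in (-r)..(id r), g (s + c * I)
      = I • (∫ y in b..c, g (((-r : ℝ) : ℂ) + y * I)) - I • ∫ y in b..c, g ((r : ℂ) + y * I) := by
      simp only [id]
      linear_combination key
    rw [dist_zero_right, this]
    refine (norm_sub_le _ _).trans_lt ?_
    simp only [norm_smul, norm_I, one_mul]
    have : ε / (2 * (L + 1)) * L + ε / (2 * (L + 1)) * L < ε := by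
      have : ε / (2 * (L + 1)) * L + ε / (2 * (L + 1)) * L = ε * (L / (L + 1)) := by
        field_simp
        ring
      rw [this]
      have : L / (L + 1) < 1 := by rw [div_lt_one (by positivity)]; linarith
      nlinarith
    linarith
  have := tendsto_nhds_unique h3 h4
  exact sub_eq_zero.mp this

lemma shift_coord (m : ℕ) (a : ℝ) (G : (Fin (m + 1) → ℂ) → ℂ)
    (U : Set (Fin (m + 1) → ℂ))
    (hTU : ∀ z : Fin (m + 1) → ℂ, (∀ k, (z k).im ∈ Set.Icc (-a) a) → z ∈ U)
    (hU : IsOpen U) (hd : DifferentiableOn ℂ G U)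
    (hint : ∀ w : Fin (m + 1) → ℝ, (∀ k, w k ∈ Set.Icc (-a) a) →
      Integrable (fun v : Fin (m + 1) → ℝ => G (fun k => (v k : ℂ) + I * (w k : ℂ))))
    (hdecay : ∀ ε > (0 : ℝ), ∃ R : ℝ, ∀ z : Fin (m + 1) → ℂ, (∀ k, (z k).im ∈ Set.Icc (-a) a) →
      R ≤ Real.sqrt (∑ k, (z k).re ^ 2) → ‖G z‖ < ε)
    (w w' : Fin (m + 1) → ℝ) (hw : ∀ k, w k ∈ Set.Icc (-a) a)
    (hw' : ∀ k, w' k ∈ Set.Icc (-a) a) (j : Fin (m + 1)) (hj : ∀ k, k ≠ j → w k = w' k) :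
    ∫ v : Fin (m + 1) → ℝ, G (fun k => (v k : ℂ) + I * (w k : ℂ)) =
      ∫ v : Fin (m + 1) → ℝ, G (fun k => (v k : ℂ) + I * (w' k : ℂ)) := by
  have mp := (volume_preserving_piFinSuccAbove (fun _ : Fin (m + 1) => ℝ) j).symm
  have me := (MeasurableEquiv.piFinSuccAbove (fun _ : Fin (m + 1) => ℝ) j).symm.measurableEmbedding
  have i1 := (mp.integrable_comp_emb me).mpr (hint w hw)
  have i2 := (mp.integrable_comp_emb me).mpr (hint w' hw')
  rw [← mp.integral_comp me, ← mp.integral_comp me]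
  rw [Measure.volume_eq_prod] at i1 i2
  rw [Measure.volume_eq_prod]
  have e1 := integral_prod_symm _ i1
  have e2 := integral_prod_symm _ i2
  simp only [Function.comp_def] at e1 e2
  rw [e1, e2]
  apply integral_congr_ae
  filter_upwards [i1.prod_left_ae, i2.prod_left_ae] with y hy1 hy2
  simp only [Function.comp_def] at hy1 hy2
  set Z : ℂ → Fin (m + 1) → ℂ :=
    fun z => j.insertNth z (fun k => (y k : ℂ) + I * (w (j.succAbove k) : ℂ)) with hZ
  have hsymm : ∀ s : ℝ, (MeasurableEquiv.piFinSuccAbove (fun _ : Fin (m + 1) => ℝ) j).symm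
      (s, y) = j.insertNth s y := fun s => rfl
  have eq1 : ∀ s : ℝ, (fun k => (((MeasurableEquiv.piFinSuccAbove (fun _ : Fin (m + 1) => ℝ) j).symm
      (s, y) k : ℝ) : ℂ) + I * (w k : ℂ)) = Z (s + w j * I) := by
    intro s
    funext k
    refine Fin.succAboveCases j ?_ (fun i => ?_) k
    · simp [hZ, hsymm, mul_comm]
    · simp [hZ, hsymm]
  have eq2 : ∀ s : ℝ, (fun k => (((MeasurableEquiv.piFinSuccAbove (fun _ : Fin (m + 1) => ℝ) j).symm
      (s, y) k : ℝ) : ℂ) + I * (w' k : ℂ)) = Z (s + w' j * I) := by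
    intro s
    funext k
    refine Fin.succAboveCases j ?_ (fun i => ?_) k
    · simp [hZ, hsymm, mul_comm]
    · simp [hZ, hsymm, hj _ (Fin.succAbove_ne j i)]
  simp only [eq1] at hy1 ⊢
  simp only [eq2] at hy2 ⊢
  have hZT : ∀ z : ℂ, z.im ∈ Set.uIcc (w j) (w' j) → ∀ k, (Z z k).im ∈ Set.Icc (-a) a := by
    intro z hz k
    refine Fin.succAboveCases j ?_ (fun i => ?_) k
    · simp only [hZ, Fin.insertNth_apply_same]
      exact Set.uIcc_subset_Icc (hw j) (hw' j) hz
    · simpa [hZ] using hw (j.succAbove i)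
  have hZd : Differentiable ℂ Z := by
    rw [differentiable_pi]
    intro k
    refine Fin.succAboveCases j ?_ (fun i => ?_) k
    · simp [hZ]
    · simp [hZ]
  refine shift_one_dim (fun z => G (Z z)) (w j) (w' j) ?_ hy1 hy2 ?_
  · exact hd.comp hZd.differentiableOn (fun z hz => hTU _ (hZT z hz))
  · intro ε hε
    obtain ⟨R, hR⟩ := hdecay ε hε
    refine ⟨R, fun z hz hzR => hR _ (hZT z hz) (hzR.trans ?_)⟩
    apply Real.abs_le_sqrt
    have := Finset.single_le_sum (f := fun k => (Z z k).re ^ 2) (fun k _ => sq_nonneg _)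
      (Finset.mem_univ j)
    simpa [hZ] using this

lemma shift_all (n : ℕ) (a : ℝ) (ha : 0 < a) (G : (Fin n → ℂ) → ℂ)
    (U : Set (Fin n → ℂ))
    (hTU : ∀ z : Fin n → ℂ, (∀ k, (z k).im ∈ Set.Icc (-a) a) → z ∈ U)
    (hU : IsOpen U) (hd : DifferentiableOn ℂ G U)
    (hint : ∀ w : Fin n → ℝ, (∀ k, w k ∈ Set.Icc (-a) a) →
      Integrable (fun v : Fin n → ℝ => G (fun k => (v k : ℂ) + I * (w k : ℂ))))
    (hdecay : ∀ ε > (0 : ℝ), ∃ R : ℝ, ∀ z : Fin n → ℂ, (∀ k, (z k).im ∈ Set.Icc (-a) a) →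
      R ≤ Real.sqrt (∑ k, (z k).re ^ 2) → ‖G z‖ < ε)
    (w : Fin n → ℝ) (hw : ∀ k, w k ∈ Set.Icc (-a) a) :
    ∫ v : Fin n → ℝ, G (fun k => (v k : ℂ) + I * (w k : ℂ)) =
      ∫ v : Fin n → ℝ, G (fun k => (v k : ℂ)) := by
  have main : ∀ s : Finset (Fin n),
      ∫ v : Fin n → ℝ, G (fun k => (v k : ℂ) + I * ((if k ∈ s then w k else 0 : ℝ) : ℂ)) =
      ∫ v : Fin n → ℝ, G (fun k => (v k : ℂ)) := by
    have hin : ∀ (s : Finset (Fin n)) k, (if k ∈ s then w k else 0 : ℝ) ∈ Set.Icc (-a) a := by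
      intro s k
      split_ifs
      · exact hw k
      · constructor <;> linarith
    intro s
    induction s using Finset.induction_on with
    | empty => simp
    | insert j s hjs ih =>
      rw [← ih]
      cases n with
      | zero => exact j.elim0
      | succ m =>
        refine shift_coord m a G U hTU hU hd hint hdecay _ _ (hin _) (hin _) j ?_
        intro k hk
        simp [hk]
  simpa using main Finset.univ

theorem density_cosh_majorant
    (n : ℕ) (hn : 1 ≤ n) (a : ℝ) (ha : 0 < a)
    (Φ : (Fin n → ℂ) → ℂ) (T : Set (Fin n → ℂ))
    (hT : T = {z : Fin n → ℂ | ∀ k, -a ≤ (z k).im ∧ (z k).im ≤ a})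
    (hol : ∃ U : Set (Fin n → ℂ), IsOpen U ∧ T ⊆ U ∧ DifferentiableOn ℂ Φ U)
    (hint : ∀ w : Fin n → ℝ, (∀ k, w k ∈ Set.Icc (-a) a) →
      Integrable (fun v : Fin n → ℝ => Φ (fun k => (v k : ℂ) + Complex.I * (w k : ℂ))))
    (hdecay : ∀ ε > (0 : ℝ), ∃ R : ℝ, ∀ z ∈ T,
      R ≤ Real.sqrt (∑ k, (z k).re ^ 2) → ‖Φ z‖ < ε)
    (p : (Fin n → ℝ) → ℂ)
    (hp : ∀ x : Fin n → ℝ, p x =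
      (((2 * Real.pi) ^ n)⁻¹ : ℝ) *
        ∫ v : Fin n → ℝ,
          Complex.exp (-Complex.I * (∑ k, x k * v k : ℝ)) * Φ (fun k => (v k : ℂ)))
    (M : ℝ)
    (hM : M = (1 / (2 * (2 * Real.pi) ^ n)) *
      ∫ v : Fin n → ℝ,
        ‖Φ (fun k => (v k : ℂ) + Complex.I * (a : ℂ))
          + Φ (fun k => (v k : ℂ) - Complex.I * (a : ℂ))‖) :
    ∀ x : Fin n → ℝ, ‖p x‖ ≤ M / Real.cosh (∑ k, x k * a) := by
  intro x
  obtain ⟨U, hU, hTU, hd⟩ := hol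
  subst hT
  set G : (Fin n → ℂ) → ℂ := fun ζ => Complex.exp (-I * ∑ k, (x k : ℂ) * ζ k) * Φ ζ with hG
  -- explicit form of `G` along a shifted real subspace
  have hGw : ∀ (w v : Fin n → ℝ), G (fun k => (v k : ℂ) + I * (w k : ℂ)) =
      (Real.exp (∑ k, x k * w k) : ℂ) * (Complex.exp (-I * (∑ k, x k * v k : ℝ)) *
        Φ (fun k => (v k : ℂ) + I * (w k : ℂ))) := by
    intro w v
    simp only [hG]
    rw [← mul_assoc, Complex.ofReal_exp, ← Complex.exp_add]
    congr 2
    push_cast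
    simp only [mul_add, Finset.sum_add_distrib, Finset.mul_sum]
    rw [add_comm]
    congr 1
    refine Finset.sum_congr rfl fun k _ => ?_
    linear_combination (-(x k : ℂ) * w k) * I_mul_I
  have hE : ∀ w : Fin n → ℝ, (∀ k, w k ∈ Set.Icc (-a) a) → Integrable (fun v : Fin n → ℝ =>
      Complex.exp (-I * (∑ k, x k * v k : ℝ)) * Φ (fun k => (v k : ℂ) + I * (w k : ℂ))) := by
    intro w hw
    refine (hint w hw).bdd_mul (c := 1) ?_ ?_
    · exact (by fun_prop : Continuous fun v : Fin n → ℝ =>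
        Complex.exp (-I * (∑ k, x k * v k : ℝ))).aestronglyMeasurable
    · refine Filter.Eventually.of_forall fun v => ?_
      rw [Complex.norm_exp]
      simp
  have shift := shift_all n a ha G U (fun z hz => hTU hz) hU
    (by
      refine DifferentiableOn.mul ?_ hd
      exact (by fun_prop : Differentiable ℂ fun ζ : Fin n → ℂ =>
        Complex.exp (-I * ∑ k, (x k : ℂ) * ζ k)).differentiableOn)
    (by
      intro w hw
      simp only [hGw]
      exact (hE w hw).const_mul _)
    (by
      intro ε hε
      set K := Real.exp (∑ k, |x k| * a) with hK
      have hK0 : 0 < K := Real.exp_pos _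
      obtain ⟨R, hR⟩ := hdecay (ε / K) (by positivity)
      refine ⟨R, fun z hz hzR => ?_⟩
      have h1 := hR z hz hzR
      simp only [hG, norm_mul]
      have h2 : ‖Complex.exp (-I * ∑ k, (x k : ℂ) * z k)‖ ≤ K := by
        rw [Complex.norm_exp, hK]
        apply Real.exp_le_exp.mpr
        have : (-I * ∑ k, (x k : ℂ) * z k).re = ∑ k, x k * (z k).im := by
          simp [Complex.im_sum]
        rw [this]
        refine Finset.sum_le_sum fun k _ => ?_
        refine (le_abs_self _).trans ?_
        rw [abs_mul]
        exact mul_le_mul_of_nonneg_left (abs_le.mpr (hz k)) (abs_nonneg _)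
      calc _ ≤ K * ‖Φ z‖ := by gcongr
        _ < K * (ε / K) := by gcongr
        _ = ε := by field_simp)
  have s1 := shift (fun _ => a) (fun _ => ⟨by linarith, le_rfl⟩)
  have s2 := shift (fun _ => -a) (fun _ => ⟨le_rfl, by linarith⟩)
  have I1 := hE (fun _ => a) (fun _ => ⟨by linarith, le_rfl⟩)
  have I2 := hE (fun _ => -a) (fun _ => ⟨le_rfl, by linarith⟩)
  simp only [hGw] at s1 s2
  rw [integral_const_mul] at s1 s2
  set A := ∑ k, x k * a with hA
  have hA' : ∑ k, x k * -a = -A := by simp [hA]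
  rw [hA'] at s2
  have hC : ∫ v : Fin n → ℝ, G (fun k => (v k : ℂ)) = ∫ v : Fin n → ℝ,
          Complex.exp (-Complex.I * (∑ k, x k * v k : ℝ)) * Φ (fun k => (v k : ℂ)) := by
    simp [hG]
  rw [hC] at s1 s2
  have hpx := hp x
  set C := ∫ v : Fin n → ℝ,
          Complex.exp (-Complex.I * (∑ k, x k * v k : ℝ)) * Φ (fun k => (v k : ℂ)) with hCdef
  set J1 := ∫ v : Fin n → ℝ, Complex.exp (-I * (∑ k, x k * v k : ℝ)) *
    Φ (fun k => (v k : ℂ) + I * (a : ℂ)) with hJ1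
  set J2 := ∫ v : Fin n → ℝ, Complex.exp (-I * (∑ k, x k * v k : ℝ)) *
    Φ (fun k => (v k : ℂ) + I * ((-a : ℝ) : ℂ)) with hJ2
  have ee : (Real.exp A : ℂ) * (Real.exp (-A) : ℂ) = 1 := by
    rw [← Complex.ofReal_mul, ← Real.exp_add]; simp
  have hsum : ((2 * Real.cosh A : ℝ) : ℂ) * C = J1 + J2 := by
    rw [Real.cosh_eq]
    have hc : ((2 * ((Real.exp A + Real.exp (-A)) / 2) : ℝ) : ℂ) =
        (Real.exp A : ℂ) + (Real.exp (-A) : ℂ) := by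
      rw [← Complex.ofReal_add]
      congr 1
      ring
    rw [hc]
    linear_combination (-(Real.exp (-A) : ℂ)) * s1 - (Real.exp A : ℂ) * s2 + (J1 + J2) * ee
  have hJ : J1 + J2 = ∫ v : Fin n → ℝ, Complex.exp (-I * (∑ k, x k * v k : ℝ)) *
      (Φ (fun k => (v k : ℂ) + I * (a : ℂ)) + Φ (fun k => (v k : ℂ) - I * (a : ℂ))) := by
    rw [hJ1, hJ2, ← integral_add I1 I2]
    refine integral_congr_ae (Filter.Eventually.of_forall fun v => ?_)
    simp [mul_add, sub_eq_add_neg]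
  have hb : ‖J1 + J2‖ ≤ ∫ v : Fin n → ℝ, ‖Φ (fun k => (v k : ℂ) + Complex.I * (a : ℂ))
          + Φ (fun k => (v k : ℂ) - Complex.I * (a : ℂ))‖ := by
    rw [hJ]
    refine (norm_integral_le_integral_norm _).trans (le_of_eq ?_)
    refine integral_congr_ae (Filter.Eventually.of_forall fun v => ?_)
    simp [Complex.norm_exp]
  have hcosh := Real.cosh_pos A
  rw [← hsum, norm_mul, Complex.norm_real, Real.norm_of_nonneg (by positivity)] at hb
  have hpi : 0 < (2 * Real.pi) ^ n := by positivity
  rw [le_div_iff₀ hcosh, hpx, norm_mul, Complex.norm_real, Real.norm_of_nonneg (by positivity), hM]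
  calc ((2 * Real.pi) ^ n)⁻¹ * ‖C‖ * Real.cosh A
      = (1 / (2 * (2 * Real.pi) ^ n)) * (2 * Real.cosh A * ‖C‖) := by field_simp
    _ ≤ _ := by gcongr
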